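/- The translative covering density of the regular octahedron satisfies θᵗ(C₃) ≥ 1 + 4/6¹⁰ > 1 + 6.6×10⁻⁸. -/

import Mathlib

open Set Pointwise MeasureTheory ENNReal Filter

/-- The regular octahedron `C₃` (the ℓ¹-ball of radius 2 in ℝ³). -/
def C₃ : Set (Fin 3 → ℝ) := {p | |p 0| + |p 1| + |p 2| ≤ 2}

/-- The cube `[-R, R]³` in ℝ³. -/
def cube (R : ℝ) : Set (Fin 3 → ℝ) := {p | ∀ i, |p i| ≤ R}

/-- The (lower) density of the translative covering `K + X`: the liminf, over
large cubes, of the total volume of the pieces of the translates inside the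
cube divided by the volume of the cube. -/
noncomputable def coveringDensity (K : Set (Fin 3 → ℝ)) (X : Set (Fin 3 → ℝ)) : ℝ≥0∞ :=
  Filter.liminf
    (fun R : ℝ => (∑' x : X, volume (cube R ∩ ((x : Fin 3 → ℝ) +ᵥ K))) / volume (cube R))
    Filter.atTop

/-- The translative covering density `θᵗ(K)`: the infimum of densities over all
translative coverings of ℝ³ by a discrete set of translates of `K`. -/
noncomputable def translativeCoveringDensity (K : Set (Fin 3 → ℝ)) : ℝ≥0∞ :=
  ⨅ (X : Set (Fin 3 → ℝ)) (_ : DiscreteTopology ↥X ∧ ⋃ x ∈ X, x +ᵥ K = univ),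
    coveringDensity K X

/-!
Lebesgue measure is translation invariant, so it suffices that every translate of one fixed
octahedron `B` contains a fixed fraction of points covered at least twice: averaging the covering
multiplicity over all translates of `B` then bounds the density.

Octahedra around two distinct centers less than `3.92` apart share a ball of radius `0.04`, and
such a pair exists near every center, say `0`. Otherwise the octahedra near `0` would almost tile.
Let `x` be a center whose octahedron lies against the face of the one around `0` in the positive
orthant, with coordinates `x₀, x₁, x₂` and, by symmetry, `x₁ ≤ x₂`. The gap that remains beside
that octahedron, along an edge of the face, has to be filled by a center near
`(2 - x₁ - ζ, 2 + x₁, ζ)` for each of two heights `ζ`. These centers differ, but they are too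
close together.
-/

section Averaging

variable {G : Type*} [AddCommGroup G] [MeasurableSpace G] [MeasurableAdd₂ G]
  {μ : Measure G} [μ.IsAddLeftInvariant] [SFinite μ] {f : G → ℝ≥0∞}

lemma mul_measure_le_mul_setLIntegral (hf : Measurable f) {B W U : Set G} {c : ℝ≥0∞}
    (hc : ∀ p : G, c ≤ ∫⁻ q in p +ᵥ B, f q ∂μ) (hU : B + W ⊆ U) (hB : MeasurableSet B) :
    c * μ W ≤ μ B * ∫⁻ q in U, f q ∂μ := by
  have hfib (p : G) : ∫⁻ q in p +ᵥ B, f q ∂μ = ∫⁻ b in B, f (p + b) ∂μ :=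
    .symm <| (measurePreserving_add_left μ p).setLIntegral_comp_emb
      (measurableEmbedding_addLeft p) f B
  calc c * μ W = ∫⁻ _ in W, c ∂μ := (setLIntegral_const _ _).symm
    _ ≤ ∫⁻ p in W, ∫⁻ b in B, f (p + b) ∂μ ∂μ := lintegral_mono fun p => (hc p).trans_eq (hfib p)
    _ = ∫⁻ b in B, ∫⁻ p in W, f (p + b) ∂μ ∂μ :=
        lintegral_lintegral_swap (hf.comp measurable_add).aemeasurable
    _ ≤ ∫⁻ _ in B, ∫⁻ q in U, f q ∂μ ∂μ := by
        refine setLIntegral_mono' hB fun b hb => ?_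
        have hbW : (b + ·) '' W ⊆ U := image_subset_iff.2 fun p hp => hU (add_mem_add hb hp)
        simp only [add_comm _ b]
        rw [(measurePreserving_add_left μ b).setLIntegral_comp_emb (measurableEmbedding_addLeft b)]
        exact lintegral_mono_set hbW
    _ = μ B * ∫⁻ q in U, f q ∂μ := by rw [setLIntegral_const, mul_comm]

end Averaging

section Density

variable {E : Type*} [NormedAddCommGroup E] [NormedSpace ℝ E] [FiniteDimensional ℝ E]
  [MeasurableSpace E] [BorelSpace E] (μ : Measure E) [μ.IsAddHaarMeasure]

lemma tendsto_measure_closedBall_sub_div (r : ℝ) :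
    Tendsto (fun R => μ (Metric.closedBall 0 (R - r)) / μ (Metric.closedBall 0 R)) atTop
      (nhds 1) := by
  set d := Module.finrank ℝ E
  have hlim : Tendsto (fun R : ℝ => ENNReal.ofReal ((1 - r / R) ^ d)) atTop (nhds 1) := by
    have hdiv : Tendsto (fun R : ℝ => r / R) atTop (nhds 0) :=
      tendsto_const_nhds.div_atTop tendsto_id
    simpa using ENNReal.tendsto_ofReal ((hdiv.const_sub 1).pow d)
  refine hlim.congr' ?_
  filter_upwards [eventually_ge_atTop r, eventually_gt_atTop 0] with R hr hR
  rw [Measure.addHaar_closedBall μ 0 (sub_nonneg.2 hr), Measure.addHaar_closedBall μ 0 hR.le,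
    ENNReal.mul_div_mul_right _ _ (Metric.measure_ball_pos μ 0 one_pos).ne' measure_ball_lt_top.ne,
    ← ENNReal.ofReal_div_of_pos (pow_pos hR _), ← div_pow, sub_div, div_self hR.ne']

lemma div_le_liminf_setLIntegral_div {f : E → ℝ≥0∞} (hf : Measurable f) {B : Set E}
    (hB : MeasurableSet B) (hBb : Bornology.IsBounded B) (hB₀ : μ B ≠ 0) {c : ℝ≥0∞}
    (hc : ∀ p : E, c ≤ ∫⁻ q in p +ᵥ B, f q ∂μ) :
    c / μ B ≤ liminf
      (fun R => (∫⁻ q in Metric.closedBall 0 R, f q ∂μ) / μ (Metric.closedBall 0 R)) atTop := by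
  obtain ⟨r, hBr⟩ := hBb.subset_closedBall 0
  have hB_top : μ B ≠ ∞ := hBb.measure_lt_top.ne
  have hlim := ENNReal.Tendsto.const_mul (a := c / μ B) (tendsto_measure_closedBall_sub_div μ r)
    (Or.inl one_ne_zero)
  rw [mul_one] at hlim
  rw [← hlim.liminf_eq]
  refine liminf_le_liminf (Eventually.of_forall fun R => ?_)
  have hsub : B + Metric.closedBall 0 (R - r) ⊆ Metric.closedBall 0 R := by
    rintro _ ⟨b, hb, p, hp, rfl⟩
    have hbr := mem_closedBall_zero_iff.1 (hBr hb)
    rw [mem_closedBall_zero_iff] at hp ⊢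
    linarith [norm_add_le b p]
  rw [← mul_div_assoc]
  refine ENNReal.div_le_div_right ?_ _
  rw [← ENNReal.mul_div_right_comm, ENNReal.div_le_iff' hB₀ hB_top]
  exact mul_measure_le_mul_setLIntegral hf hc hsub hB

end Density

section CoveringMultiplicity

/-- The number of translates of `K` by elements of `X` that contain the point `p`. -/
noncomputable def coveringMultiplicity {G : Type*} [Add G] (K X : Set G) (p : G) : ℝ≥0∞ :=
  ∑' x : X, ((x : G) +ᵥ K).indicator 1 p

section Add

variable {G : Type*} [Add G] {K X : Set G}

lemma one_le_coveringMultiplicity (hX : ⋃ x ∈ X, x +ᵥ K = univ) (p : G) :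
    1 ≤ coveringMultiplicity K X p := by
  obtain ⟨x, hx, hp⟩ := mem_iUnion₂.1 (hX ▸ mem_univ p)
  calc (1 : ℝ≥0∞) = (x +ᵥ K).indicator 1 p := by simp [indicator_of_mem hp]
    _ ≤ coveringMultiplicity K X p :=
        ENNReal.le_tsum (f := fun x : X => ((x : G) +ᵥ K).indicator 1 p) ⟨x, hx⟩

lemma two_le_coveringMultiplicity {x y p : G} (hx : x ∈ X) (hy : y ∈ X) (hne : x ≠ y)
    (hpx : p ∈ x +ᵥ K) (hpy : p ∈ y +ᵥ K) : 2 ≤ coveringMultiplicity K X p := by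
  classical
  have hne' : (⟨x, hx⟩ : X) ≠ ⟨y, hy⟩ := Subtype.coe_ne_coe.1 hne
  calc (2 : ℝ≥0∞) = ∑ z ∈ ({⟨x, hx⟩, ⟨y, hy⟩} : Finset X), ((z : G) +ᵥ K).indicator 1 p := by
        rw [Finset.sum_pair hne', indicator_of_mem hpx, indicator_of_mem hpy, Pi.one_apply,
          one_add_one_eq_two]
    _ ≤ coveringMultiplicity K X p := ENNReal.sum_le_tsum _

end Add

section Measure

variable {G : Type*} [AddGroup G] [MeasurableSpace G] [MeasurableAdd G] {K X : Set G}

lemma measurable_coveringMultiplicity (hX : X.Countable) (hK : MeasurableSet K) :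
    Measurable (coveringMultiplicity K X) :=
  have := hX.to_subtype
  Measurable.tsum fun x => measurable_one.indicator (hK.const_vadd (x : G))

lemma setLIntegral_coveringMultiplicity (μ : Measure G) (hX : X.Countable) (hK : MeasurableSet K)
    (Q : Set G) :
    ∫⁻ p in Q, coveringMultiplicity K X p ∂μ = ∑' x : X, μ (Q ∩ ((x : G) +ᵥ K)) := by
  have := hX.to_subtype
  have hm (x : X) : MeasurableSet ((x : G) +ᵥ K) := hK.const_vadd _
  unfold coveringMultiplicity
  rw [lintegral_tsum fun x => (measurable_one.indicator (hm x)).aemeasurable]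
  simp only [lintegral_indicator_one (hm _), Measure.restrict_apply (hm _), inter_comm Q]

lemma measure_add_measure_le_setLIntegral_coveringMultiplicity (μ : Measure G)
    (hX : X.Countable) (hK : MeasurableSet K) (hcov : ⋃ x ∈ X, x +ᵥ K = univ) (Q : Set G) :
    μ Q + μ (Q ∩ {q | 2 ≤ coveringMultiplicity K X q}) ≤
      ∫⁻ q in Q, coveringMultiplicity K X q ∂μ := by
  set D := {q | 2 ≤ coveringMultiplicity K X q}
  have hD : MeasurableSet D :=
    measurableSet_le measurable_const (measurable_coveringMultiplicity hX hK)
  calc μ Q + μ (Q ∩ D) = ∫⁻ q in Q, (1 + D.indicator 1 q) ∂μ := by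
        rw [lintegral_add_left measurable_const, setLIntegral_one, lintegral_indicator_one hD,
          Measure.restrict_apply hD, inter_comm]
    _ ≤ ∫⁻ q in Q, coveringMultiplicity K X q ∂μ := by
        refine lintegral_mono fun q => ?_
        by_cases hq : q ∈ D
        · rw [indicator_of_mem hq, Pi.one_apply, one_add_one_eq_two]
          exact hq
        · rw [indicator_of_notMem hq, add_zero]
          exact one_le_coveringMultiplicity hcov q

end Measure

lemma one_add_div_le_liminf_tsum_measure_div {E : Type*} [NormedAddCommGroup E] [NormedSpace ℝ E]
    [FiniteDimensional ℝ E] [MeasurableSpace E] [BorelSpace E] (μ : Measure E)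
    [μ.IsAddHaarMeasure] {K X B : Set E} {d : ℝ≥0∞} (hX : X.Countable) (hK : MeasurableSet K)
    (hcov : ⋃ x ∈ X, x +ᵥ K = univ) (hB : MeasurableSet B) (hBb : Bornology.IsBounded B)
    (hB₀ : μ B ≠ 0)
    (hd : ∀ y : E, d ≤ μ ((y +ᵥ B) ∩ {q | 2 ≤ coveringMultiplicity K X q})) :
    1 + d / μ B ≤ liminf (fun R => (∑' x : X, μ (Metric.closedBall 0 R ∩ ((x : E) +ᵥ K))) /
      μ (Metric.closedBall 0 R)) atTop := by
  have hc (y : E) : μ B + d ≤ ∫⁻ q in y +ᵥ B, coveringMultiplicity K X q ∂μ :=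
    calc μ B + d ≤ μ (y +ᵥ B) + μ ((y +ᵥ B) ∩ {q | 2 ≤ coveringMultiplicity K X q}) :=
          add_le_add (measure_vadd μ y B).ge (hd y)
      _ ≤ _ := measure_add_measure_le_setLIntegral_coveringMultiplicity μ hX hK hcov _
  simp only [← setLIntegral_coveringMultiplicity μ hX hK]
  rw [← ENNReal.div_self hB₀ hBb.measure_lt_top.ne, ← ENNReal.add_div]
  exact div_le_liminf_setLIntegral_div μ (measurable_coveringMultiplicity hX hK) hB hBb hB₀ hc

end CoveringMultiplicity

section AlmostTiling

variable {E : Type*} [SeminormedAddCommGroup E] {r δ ε : ℝ} {A : Set E}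

/-- The closed balls of radius `r` with centers in `A` cover the space, one of the centers is `0`,
and near `0` the balls almost form a packing, with defect `δ`. A ball that covers a point at
distance `r + ε` from `0` has its center in the closed ball of radius `2 * r + ε`, so this is the
region in which the separation of the centers is prescribed. -/
structure IsAlmostTiling (r δ ε : ℝ) (A : Set E) : Prop where
  zero_mem : 0 ∈ A
  exists_dist_le : ∀ p, ∃ a ∈ A, dist p a ≤ r
  pairwise_le_dist :
    (A ∩ Metric.closedBall 0 (2 * r + ε)).Pairwise fun x y => 2 * r - δ ≤ dist x y

namespace IsAlmostTiling

lemma le_dist (hA : IsAlmostTiling r δ ε A) {x y : E} (hx : x ∈ A) (hy : y ∈ A)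
    (hxr : ‖x‖ ≤ 2 * r + ε) (hyr : ‖y‖ ≤ 2 * r + ε) (hne : x ≠ y) : 2 * r - δ ≤ dist x y :=
  hA.pairwise_le_dist ⟨hx, mem_closedBall_zero_iff.2 hxr⟩ ⟨hy, mem_closedBall_zero_iff.2 hyr⟩ hne

lemma preimage [NormedSpace ℝ E] (hA : IsAlmostTiling r δ ε A) (e : E ≃ₗᵢ[ℝ] E) :
    IsAlmostTiling r δ ε (e ⁻¹' A) where
  zero_mem := by simpa using hA.zero_mem
  exists_dist_le p := by
    obtain ⟨a, ha, hpa⟩ := hA.exists_dist_le (e p)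
    exact ⟨e.symm a, by simpa using ha, by rwa [← e.dist_map, e.apply_symm_apply]⟩
  pairwise_le_dist x hx y hy hne := by
    simpa only [e.dist_map] using hA.pairwise_le_dist ⟨hx.1, by simpa using hx.2⟩
      ⟨hy.1, by simpa using hy.2⟩ (e.injective.ne hne)

lemma exists_dist_le_of_norm_eq (hA : IsAlmostTiling r δ ε A) (hε : 0 < ε) {v : E}
    (hv : ‖v‖ = r + ε) :
    ∃ t ∈ A, dist v t ≤ r ∧ 2 * r - δ ≤ ‖t‖ ∧ ‖t‖ ≤ 2 * r + ε := by
  obtain ⟨t, ht, hvt⟩ := hA.exists_dist_le v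
  have hr : 0 ≤ r := dist_nonneg.trans hvt
  have htr : ‖t‖ ≤ 2 * r + ε := by
    linarith [norm_le_norm_add_norm_sub v t, dist_eq_norm v t]
  have hne : t ≠ 0 := by
    rintro rfl
    rw [dist_zero_right] at hvt
    linarith
  have hle := hA.le_dist ht hA.zero_mem htr (by rw [norm_zero]; linarith) hne
  exact ⟨t, ht, hvt, by rwa [dist_zero_right] at hle, htr⟩

end IsAlmostTiling

end AlmostTiling

section L1

variable {ι : Type*} [Fintype ι]

lemma norm_eq_sum_of_nonneg {x : PiLp 1 fun _ : ι => ℝ} (hx : ∀ i, 0 ≤ x i) :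
    ‖x‖ = ∑ i, x i := by
  simp only [PiLp.norm_eq_of_L1, Real.norm_of_nonneg (hx _)]

-- Equality in the `ℓ¹` triangle inequality through `v` means that `v i` lies between `0` and `t i`
-- for every `i`.
lemma sub_le_of_norm_add_dist_le {v t : PiLp 1 fun _ : ι => ℝ} {η : ℝ}
    (h : ‖v‖ + dist v t ≤ ‖t‖ + 2 * η) {i : ι} (hi : η < v i) : v i - η ≤ t i := by
  have hi_le : |v i| + |v i - t i| - |t i| ≤ ∑ j, (|v j| + |v j - t j| - |t j|) :=
    Finset.single_le_sum (f := fun j => |v j| + |v j - t j| - |t j|)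
      (fun j _ => by linarith [abs_sub_abs_le_abs_sub (t j) (v j), abs_sub_comm (t j) (v j)])
      (Finset.mem_univ i)
  rw [Finset.sum_sub_distrib, Finset.sum_add_distrib] at hi_le
  simp only [PiLp.norm_eq_of_L1, PiLp.dist_eq_of_L1, Real.norm_eq_abs, Real.dist_eq] at h
  rcases abs_cases (t i) with ⟨ht, -⟩ | ⟨ht, -⟩ <;>
    linarith [le_abs_self (v i), le_abs_self (v i - t i)]

/-- The position of a center `x` in the positive orthant whose `ℓ¹`-ball of radius `r` almost
touches the ball around `0`: the defects `δ` and `ε` are those of `IsAlmostTiling`. -/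
structure IsBeyondFace (r δ ε : ℝ) (x : PiLp 1 fun _ : ι => ℝ) : Prop where
  nonneg : ∀ i, 0 ≤ x i
  le_sum : 2 * r - δ ≤ ∑ i, x i
  sum_le : ∑ i, x i ≤ 2 * r + ε

lemma IsBeyondFace.norm_le {r δ ε : ℝ} {x : PiLp 1 fun _ : ι => ℝ}
    (hx : IsBeyondFace r δ ε x) : ‖x‖ ≤ 2 * r + ε :=
  (norm_eq_sum_of_nonneg hx.nonneg).trans_le hx.sum_le

lemma IsBeyondFace.piLpCongrLeft {r δ ε : ℝ} {x : PiLp 1 fun _ : ι => ℝ}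
    (hx : IsBeyondFace r δ ε x) (σ : Equiv.Perm ι) :
    IsBeyondFace r δ ε (LinearIsometryEquiv.piLpCongrLeft 1 ℝ ℝ σ x) where
  nonneg i := hx.nonneg (σ.symm i)
  le_sum := hx.le_sum.trans_eq (σ.symm.sum_comp x).symm
  sum_le := (σ.symm.sum_comp x).trans_le hx.sum_le

lemma IsAlmostTiling.exists_center_beyond_face {r δ ε : ℝ} {A : Set (PiLp 1 fun _ : ι => ℝ)}
    (hA : IsAlmostTiling r δ ε A) (hδ : 0 ≤ δ) (hε : 0 < ε) {v : PiLp 1 fun _ : ι => ℝ}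
    (hv : ∀ i, (δ + ε) / 2 < v i) (hsum : ∑ i, v i = r + ε) :
    ∃ t ∈ A, IsBeyondFace r δ ε t ∧ ∀ i, v i - (δ + ε) / 2 ≤ t i := by
  have hnorm : ‖v‖ = r + ε := by
    rw [norm_eq_sum_of_nonneg fun i => by linarith [hv i], hsum]
  obtain ⟨t, ht, hvt, hl, hu⟩ := hA.exists_dist_le_of_norm_eq hε hnorm
  have hle i : v i - (δ + ε) / 2 ≤ t i := sub_le_of_norm_add_dist_le (by linarith) (hv i)
  have ht₀ i : 0 ≤ t i := by linarith [hv i, hle i]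
  rw [norm_eq_sum_of_nonneg ht₀] at hl hu
  exact ⟨t, ht, ⟨ht₀, hl, hu⟩, hle⟩

end L1

lemma closedBall_midpoint_subset_inter {E : Type*} [SeminormedAddCommGroup E] [NormedSpace ℝ E]
    {x y : E} {r ρ : ℝ} (h : dist x y ≤ 2 * (r - ρ)) :
    Metric.closedBall (midpoint ℝ x y) ρ ⊆ Metric.closedBall x r ∩ Metric.closedBall y r := by
  refine subset_inter (Metric.closedBall_subset_closedBall' ?_)
    (Metric.closedBall_subset_closedBall' ?_)
  · rw [dist_midpoint_left, Real.norm_of_nonneg zero_le_two]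
    linarith
  · rw [dist_midpoint_right, Real.norm_of_nonneg zero_le_two]
    linarith

section Octahedron

variable {A : Set (PiLp 1 fun _ : Fin 3 => ℝ)}

lemma dist_eq_abs_add_abs_add_abs (x y : PiLp 1 fun _ : Fin 3 => ℝ) :
    dist x y = |x 0 - y 0| + |x 1 - y 1| + |x 2 - y 2| := by
  simp only [PiLp.dist_eq_of_L1, Fin.sum_univ_three, Real.dist_eq]

namespace IsAlmostTiling

lemma exists_center_of_add_eq (hA : IsAlmostTiling 2 0.08 0.02 A) {v₀ v₁ v₂ : ℝ}
    (h₀ : 0.05 < v₀) (h₁ : 0.05 < v₁) (h₂ : 0.05 < v₂) (hsum : v₀ + v₁ + v₂ = 2.02) :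
    ∃ t ∈ A, IsBeyondFace 2 0.08 0.02 t ∧
      v₀ - 0.05 ≤ t 0 ∧ v₁ - 0.05 ≤ t 1 ∧ v₂ - 0.05 ≤ t 2 := by
  obtain ⟨t, ht, hface, hle⟩ := hA.exists_center_beyond_face (by norm_num) (by norm_num)
    (v := !₁[v₀, v₁, v₂])
    (fun i => by fin_cases i <;> norm_num <;> linarith)
    (by simpa [Fin.sum_univ_three] using hsum.trans (by norm_num))
  have hη : ((0.08 : ℝ) + 0.02) / 2 = 0.05 := by norm_num
  simp only [hη] at hle
  exact ⟨t, ht, hface, hle 0, hle 1, hle 2⟩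

/-- Let `x` be a center on the face `x₀ + x₁ + x₂ = 2` of the octahedron around `0`. In an exact
tiling, the gap beside the octahedron around `x` near the edge `{x₂ = 0}` could be filled at height
`ζ` only by the octahedron around `(2 - x₁ - ζ, 2 + x₁, ζ)`. -/
lemma exists_center_in_gap (hA : IsAlmostTiling 2 0.08 0.02 A)
    {x : PiLp 1 fun _ : Fin 3 => ℝ} (hx : x ∈ A) (hface : IsBeyondFace 2 0.08 0.02 x) {ζ : ℝ}
    (hζ : 0.05 < ζ) (hxζ : x 1 + ζ < 1.91) (hl : ζ + 0.15 < x 2) (hu : x 2 < ζ + 1.86) :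
    ∃ t ∈ A, IsBeyondFace 2 0.08 0.02 t ∧
      1.91 - x 1 - ζ ≤ t 0 ∧ ζ - 0.05 ≤ t 2 ∧ t 0 + t 2 ≤ 2.06 - x 1 := by
  have hx₁ : 0 ≤ x 1 := hface.nonneg 1
  obtain ⟨t, ht, htface, h₀, h₁, h₂⟩ := hA.exists_center_of_add_eq
    (v₀ := 1.96 - x 1 - ζ) (v₁ := x 1 + 0.06) (v₂ := ζ)
    (by linarith) (by linarith) hζ (by ring)
  have hne : x ≠ t := by
    rintro rfl
    linarith
  have hdist := hA.le_dist hx ht hface.norm_le htface.norm_le hne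
  rw [dist_eq_abs_add_abs_add_abs, abs_of_nonpos (by linarith : x 1 - t 1 ≤ 0)] at hdist
  have hxsum := hface.sum_le
  have hxsum' := hface.le_sum
  have htsum := htface.sum_le
  rw [Fin.sum_univ_three] at hxsum hxsum' htsum
  refine ⟨t, ht, htface, by linarith, h₂, ?_⟩
  rcases abs_cases (x 0 - t 0) with ⟨habs₀, -⟩ | ⟨habs₀, -⟩ <;>
    rcases abs_cases (x 2 - t 2) with ⟨habs₂, -⟩ | ⟨habs₂, -⟩ <;>
    linarith

-- Two centers that fill the gap at heights differing by `0.21` are distinct but close together.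
lemma lt_of_isBeyondFace (hA : IsAlmostTiling 2 0.08 0.02 A) {x : PiLp 1 fun _ : Fin 3 => ℝ}
    (hx : x ∈ A) (hface : IsBeyondFace 2 0.08 0.02 x) (h₀ : 0.97 ≤ x 0)
    (h₂ : 0.45 ≤ x 2) : x 2 < x 1 := by
  by_contra! hle
  have hxsum := hface.sum_le
  rw [Fin.sum_univ_three] at hxsum
  obtain ⟨ζ, hζ, hxζ, hl, hu⟩ :
      ∃ ζ : ℝ, 0.05 < ζ ∧ x 1 + ζ < 1.70 ∧ ζ + 0.36 < x 2 ∧ x 2 < ζ + 1.86 := by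
    rcases lt_or_ge (x 2) 1.86 with h | h
    · exact ⟨0.06, by norm_num, by linarith, by linarith, by linarith⟩
    · exact ⟨x 2 - 1.8, by linarith, by linarith, by linarith, by linarith⟩
  obtain ⟨t, ht, htface, ht₀, ht₂, ht₀₂⟩ :=
    hA.exists_center_in_gap hx hface hζ (by linarith) (by linarith) hu
  obtain ⟨s, hs, hsface, hs₀, hs₂, hs₀₂⟩ :=
    hA.exists_center_in_gap hx hface (ζ := ζ + 0.21) (by linarith) (by linarith) (by linarith)
      (by linarith)
  have hne : t ≠ s := by
    rintro rfl
    linarith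
  have hdist := hA.le_dist ht hs htface.norm_le hsface.norm_le hne
  rw [dist_eq_abs_add_abs_add_abs] at hdist
  obtain ⟨-, htl, htu⟩ := htface
  obtain ⟨-, hsl, hsu⟩ := hsface
  rw [Fin.sum_univ_three] at htl htu hsl hsu
  have hts₀ : |t 0 - s 0| ≤ 1 := abs_le.2 ⟨by linarith, by linarith⟩
  have hts₁ : |t 1 - s 1| ≤ 1 := abs_le.2 ⟨by linarith, by linarith⟩
  have hts₂ : |t 2 - s 2| ≤ 1 := abs_le.2 ⟨by linarith, by linarith⟩
  linarith

end IsAlmostTiling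

theorem not_isAlmostTiling_octahedron : ¬ IsAlmostTiling 2 0.08 0.02 A := by
  intro hA
  obtain ⟨x, hx, hface, h₀, h₁, h₂⟩ := hA.exists_center_of_add_eq
    (v₀ := 1.02) (v₁ := 0.5) (v₂ := 0.5) (by norm_num) (by norm_num) (by norm_num) (by norm_num)
  let e := LinearIsometryEquiv.piLpCongrLeft 1 ℝ ℝ (Equiv.swap (1 : Fin 3) 2)
  have hex : e (e x) = x := by
    ext i
    simp [e]
  have hlt : x 2 < x 1 := hA.lt_of_isBeyondFace hx hface (by linarith) (by linarith)
  have hlt' : x 1 < x 2 := (hA.preimage e).lt_of_isBeyondFace (x := e x) (by simpa [hex] using hx)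
    (hface.piLpCongrLeft _) (by change 0.97 ≤ x 0; linarith) (by change 0.45 ≤ x 1; linarith [h₁])
  exact hlt.not_gt hlt'

theorem exists_ne_dist_lt (h0 : 0 ∈ A) (hcov : ∀ p, ∃ a ∈ A, dist p a ≤ 2) :
    ∃ x ∈ A, ∃ y ∈ A, x ≠ y ∧ ‖x‖ ≤ 4.02 ∧ ‖y‖ ≤ 4.02 ∧ dist x y < 3.92 := by
  by_contra! hsep
  refine not_isAlmostTiling_octahedron ⟨h0, hcov, fun x ⟨hx, hxr⟩ y ⟨hy, hyr⟩ hne => ?_⟩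
  rw [mem_closedBall_zero_iff] at hxr hyr
  have := hsep x hx y hy hne (by linarith) (by linarith)
  linarith

lemma exists_closedBall_covered_twice {A : Set (PiLp 1 fun _ : Fin 3 => ℝ)}
    (hcov : ∀ p, ∃ a ∈ A, dist p a ≤ 2) (y : PiLp 1 fun _ : Fin 3 => ℝ) :
    ∃ a ∈ A, ∃ b ∈ A, a ≠ b ∧ ∃ m, Metric.closedBall m 0.04 ⊆
      Metric.closedBall y 6.08 ∩ (Metric.closedBall a 2 ∩ Metric.closedBall b 2) := by
  obtain ⟨o, ho, hyo⟩ := hcov y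
  obtain ⟨a, ha, b, hb, hne, han, hbn, hab⟩ :=
    exists_ne_dist_lt (A := (o + ·) ⁻¹' A) (by simpa using ho) fun p => by
      obtain ⟨a, ha, hpa⟩ := hcov (o + p)
      exact ⟨a - o, by simpa using ha, by rwa [← dist_add_left o, add_sub_cancel]⟩
  refine ⟨o + a, ha, o + b, hb, by simpa using hne, midpoint ℝ (o + a) (o + b), subset_inter
    (Metric.closedBall_subset_closedBall' ?_) (closedBall_midpoint_subset_inter ?_)⟩
  · have hoa : dist (o + a) o ≤ 4.02 := by simpa using han
    have hob : dist (o + b) o ≤ 4.02 := by simpa using hbn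
    have hmid := dist_midpoint_midpoint_le (o + a) (o + b) o o
    rw [midpoint_self] at hmid
    rw [dist_comm] at hyo
    linarith [dist_triangle (midpoint ℝ (o + a) (o + b)) o y]
  · rw [dist_add_left]
    linarith

open WithLp (toLp)

lemma mem_C₃ {p : Fin 3 → ℝ} : p ∈ C₃ ↔ ‖toLp 1 p‖ ≤ 2 := by
  rw [PiLp.norm_eq_of_L1, Fin.sum_univ_three]
  rfl

lemma mem_vadd_smul_C₃ {x p : Fin 3 → ℝ} {s : ℝ} (hs : 0 < s) :
    p ∈ x +ᵥ s • C₃ ↔ toLp 1 p ∈ Metric.closedBall (toLp 1 x) (s * 2) := by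
  rw [mem_vadd_set_iff_neg_vadd_mem, mem_smul_set_iff_inv_smul_mem₀ hs.ne', mem_C₃,
    WithLp.toLp_smul, norm_smul, norm_inv, Real.norm_of_nonneg hs.le, inv_mul_le_iff₀ hs,
    Metric.mem_closedBall, dist_eq_norm, ← WithLp.toLp_sub, vadd_eq_add, neg_add_eq_sub]

lemma mem_vadd_C₃ {x p : Fin 3 → ℝ} :
    p ∈ x +ᵥ C₃ ↔ toLp 1 p ∈ Metric.closedBall (toLp 1 x) 2 := by
  simpa using mem_vadd_smul_C₃ (x := x) (p := p) one_pos

lemma exists_smul_C₃_covered_twice {X : Set (Fin 3 → ℝ)} (hcov : ⋃ x ∈ X, x +ᵥ C₃ = univ)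
    (y : Fin 3 → ℝ) :
    ∃ m : Fin 3 → ℝ, m +ᵥ (0.02 : ℝ) • C₃ ⊆
      (y +ᵥ (3.04 : ℝ) • C₃) ∩ {q | 2 ≤ coveringMultiplicity C₃ X q} := by
  obtain ⟨a, ha, b, hb, hne, m, hm⟩ := exists_closedBall_covered_twice (A := WithLp.ofLp ⁻¹' X)
    (fun p => by
      obtain ⟨x, hx, hp⟩ := mem_iUnion₂.1 (hcov ▸ mem_univ p.ofLp)
      exact ⟨toLp 1 x, hx, mem_vadd_C₃.1 hp⟩) (toLp 1 y)
  have hρ : (0.02 : ℝ) * 2 = 0.04 := by norm_num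
  have hr : (3.04 : ℝ) * 2 = 6.08 := by norm_num
  refine ⟨m.ofLp, fun q hq => ?_⟩
  rw [mem_vadd_smul_C₃ (by norm_num), hρ] at hq
  obtain ⟨hqy, hqa, hqb⟩ := hm hq
  exact ⟨(mem_vadd_smul_C₃ (by norm_num)).2 (hr ▸ hqy), two_le_coveringMultiplicity ha hb
    (fun h => hne (WithLp.ofLp_injective 1 h)) (mem_vadd_C₃.2 hqa) (mem_vadd_C₃.2 hqb)⟩

lemma isClosed_C₃ : IsClosed C₃ :=
  isClosed_le (by fun_prop) continuous_const

lemma isBounded_C₃ : Bornology.IsBounded C₃ :=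
  isBounded_iff_forall_norm_le.2 ⟨2, fun p hp => (pi_norm_le_iff_of_nonempty p).2 fun i =>
    (PiLp.norm_apply_le (toLp 1 p) i).trans (mem_C₃.1 hp)⟩

lemma volume_C₃_ne_zero : volume C₃ ≠ 0 := by
  have hopen : IsOpen {p : Fin 3 → ℝ | |p 0| + |p 1| + |p 2| < 2} :=
    isOpen_lt (by fun_prop) continuous_const
  have hsub : {p : Fin 3 → ℝ | |p 0| + |p 1| + |p 2| < 2} ⊆ C₃ :=
    ofPred_subset_ofPred.2 fun _ => le_of_lt
  exact ((hopen.measure_pos volume ⟨0, by simp⟩).trans_le (measure_mono hsub)).ne'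

lemma cube_eq_closedBall (R : ℝ) : cube R = Metric.closedBall 0 R := by
  ext p
  rw [mem_closedBall_zero_iff, pi_norm_le_iff_of_nonempty]
  rfl

lemma volume_smul_C₃_div {s t : ℝ} (hs : 0 ≤ s) (ht : 0 < t) :
    volume (s • C₃) / volume (t • C₃) = ENNReal.ofReal (s / t) ^ 3 := by
  rw [Measure.addHaar_smul_of_nonneg volume hs, Measure.addHaar_smul_of_nonneg volume ht.le,
    Module.finrank_fin_fun, ENNReal.mul_div_mul_right _ _ volume_C₃_ne_zero
      isBounded_C₃.measure_lt_top.ne, ← ENNReal.ofReal_div_of_pos (by positivity), ← div_pow,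
    ENNReal.ofReal_pow (by positivity)]

lemma four_div_six_pow_ten_le : (4 / 6 ^ 10 : ℝ≥0∞) ≤ 1 / 152 ^ 3 := by
  rw [← ENNReal.toReal_le_toReal (by finiteness) (by finiteness)]
  norm_num

lemma ofReal_lt_four_div_six_pow_ten : ENNReal.ofReal 6.6e-8 < 4 / 6 ^ 10 := by
  rw [ENNReal.ofReal_lt_iff_lt_toReal (by norm_num) (by finiteness)]
  norm_num

theorem octahedron_translative_covering_density_lb_general {X : Set (Fin 3 → ℝ)}
    (hX : X.Countable) (hcov : ⋃ x ∈ X, x +ᵥ C₃ = univ) :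
    1 + 1 / 152 ^ 3 ≤ coveringDensity C₃ X := by
  have hratio : volume ((0.02 : ℝ) • C₃) / volume ((3.04 : ℝ) • C₃) = 1 / 152 ^ 3 := by
    have h : (0.02 / 3.04 : ℝ) = 152⁻¹ := by norm_num
    rw [volume_smul_C₃_div (by norm_num) (by norm_num), h, ENNReal.ofReal_inv_of_pos (by norm_num),
      ENNReal.ofReal_ofNat, one_div, ENNReal.inv_pow]
  have hB₀ : volume ((3.04 : ℝ) • C₃) ≠ 0 := by
    rw [Measure.addHaar_smul_of_nonneg volume (by norm_num)]
    exact mul_ne_zero (by norm_num) volume_C₃_ne_zero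
  simp only [coveringDensity, cube_eq_closedBall]
  rw [← hratio]
  refine one_add_div_le_liminf_tsum_measure_div volume hX isClosed_C₃.measurableSet hcov
    (isClosed_C₃.measurableSet.const_smul₀ _) (isBounded_C₃.smul₀ _) hB₀ fun y => ?_
  obtain ⟨m, hm⟩ := exists_smul_C₃_covered_twice hcov y
  exact (measure_vadd volume m _).symm.trans_le (measure_mono hm)

end Octahedron

/-- The translative covering density of the regular octahedron satisfies
`θᵗ(C₃) ≥ 1 + 4/6¹⁰ > 1 + 6.6·10⁻⁸`. -/
theorem octahedron_translative_covering_density_lb :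
    (1 + 4 / 6 ^ 10 : ℝ≥0∞) ≤ translativeCoveringDensity C₃ ∧
      (1 + ENNReal.ofReal (6.6e-8) : ℝ≥0∞) < 1 + 4 / 6 ^ 10 := by
  refine ⟨le_iInf₂ fun X ⟨hdisc, hcov⟩ => ?_,
    ENNReal.add_lt_add_left ENNReal.one_ne_top ofReal_lt_four_div_six_pow_ten⟩
  have hX : X.Countable := (HereditarilyLindelofSpace.isLindelof X).countable hdisc
  exact (add_le_add_right four_div_six_pow_ten_le 1).trans
    (octahedron_translative_covering_density_lb_general hX hcov)
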